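/- Let N ≥ 2 and let A be an N×N real matrix with nonnegative off-diagonal entries which is irreducible. Then for every t > 0: (a) every entry of the matrix exponential exp(tA) is strictly positive, and (b) the spectral radius of exp(tA) equals e^{t·s(A)}, where s(A) := max{Re γ : γ is a (complex) eigenvalue of A}. -/

import Mathlib

/-- Irreducibility: any two distinct indices are connected by a finite chain of
strictly positive entries. -/
def MatrixIrreducible {N : ℕ} (A : Matrix (Fin N) (Fin N) ℝ) : Prop :=
  ∀ i j : Fin N, i ≠ j → ∃ (k : ℕ) (c : ℕ → Fin N),
    c 0 = i ∧ c k = j ∧ ∀ l < k, 0 < A (c l) (c (l + 1))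

/-- The matrix exponential `exp M = ∑ₖ Mᵏ/k!`. -/
noncomputable def matExp {N : ℕ} (M : Matrix (Fin N) (Fin N) ℝ) :
    Matrix (Fin N) (Fin N) ℝ :=
  ∑' k : ℕ, ((k.factorial : ℝ)⁻¹) • M ^ k

/-- The set of real parts of the (complex) eigenvalues of a real matrix. -/
def spectrumRe {N : ℕ} (M : Matrix (Fin N) (Fin N) ℝ) : Set ℝ :=
  {x : ℝ | ∃ γ ∈ spectrum ℂ (M.map Complex.ofReal), γ.re = x}

/-- The set of moduli of the (complex) eigenvalues of a real matrix. -/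
def spectrumAbs {N : ℕ} (M : Matrix (Fin N) (Fin N) ℝ) : Set ℝ :=
  {x : ℝ | ∃ γ ∈ spectrum ℂ (M.map Complex.ofReal), ‖γ‖ = x}

/-!
A large scalar matrix `c • 1` makes `t • A + c • 1` entrywise nonnegative while multiplying the
exponential by `exp c > 0` only. For a nonnegative matrix every term of the exponential series is
nonnegative, and a chain of `k` positive entries from `i` to `j` makes the `k`-th one positive
at `(i, j)`.

The spectral radius follows from the spectral mapping identity `σ(exp a) = exp(σ(a))`, valid in any
complex Banach algebra: the bicommutant of `a` is a commutative Banach algebra in which `a` and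
`exp a` keep their spectra, and there the spectrum is the set of values of the characters, which
commute with `exp`. Finally `|exp(tγ)| = exp(t Re γ)` is increasing in `Re γ`.
-/

open NormedSpace

theorem isUnit_coe_centralizer_iff {R A : Type*} [CommSemiring R] [Semiring A] [Algebra R A]
    {s : Set A} {x : Subalgebra.centralizer R s} : IsUnit (x : A) ↔ IsUnit x := by
  refine ⟨?_, fun hx => hx.map (Subalgebra.centralizer R s).val⟩
  rintro ⟨u, hu⟩
  have hinv : (↑u⁻¹ : A) ∈ Subalgebra.centralizer R s := fun m hm =>
    Commute.units_inv_right (show Commute m u from hu ▸ x.2 m hm)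
  exact isUnit_iff_exists.2 ⟨⟨_, hinv⟩, Subtype.ext (by simp [← hu]), Subtype.ext (by simp [← hu])⟩

theorem spectrum_coe_centralizer {R A : Type*} [CommRing R] [Ring A] [Algebra R A] {s : Set A}
    (x : Subalgebra.centralizer R s) : spectrum R (x : A) = spectrum R x := by
  ext r
  rw [spectrum.mem_iff, spectrum.mem_iff, ← isUnit_coe_centralizer_iff]
  rfl

theorem spectrum_exp_of_normedCommRing {A : Type*} [NormedCommRing A] [NormedAlgebra ℂ A]
    [CompleteSpace A] (a : A) : spectrum ℂ (exp a) = Complex.exp '' spectrum ℂ a := by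
  let : NormedAlgebra ℚ A := .restrictScalars ℚ ℂ A
  have map_exp_character (φ : WeakDual.characterSpace ℂ A) : φ (exp a) = Complex.exp (φ a) := by
    rw [Complex.exp_eq_exp_ℂ]
    exact map_exp φ (map_continuous φ) a
  ext μ
  simp only [Set.mem_image, WeakDual.CharacterSpace.mem_spectrum_iff_exists, map_exp_character,
    exists_exists_eq_and]

theorem spectrum_exp {A : Type*} [NormedRing A] [NormedAlgebra ℂ A] [CompleteSpace A] (a : A) :
    spectrum ℂ (exp a) = Complex.exp '' spectrum ℂ a := by
  let : NormedAlgebra ℚ A := .restrictScalars ℚ ℂ A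
  let S := Subalgebra.centralizer ℂ (Set.centralizer {a})
  have hclosed : IsClosed (S : Set A) := Set.isClosed_centralizer _
  have : CompleteSpace S := hclosed.completeSpace_coe
  have hcomm : ∀ x ∈ S, ∀ y ∈ S, x * y = y * x :=
    Set.centralizer_centralizer_comm_of_comm (by simp)
  let : NormedCommRing S :=
    { (inferInstance : NormedRing S) with
      mul_comm := fun x y => Subtype.ext (hcomm x x.2 y y.2) }
  let : NormedAlgebra ℚ S := .restrictScalars ℚ ℂ S
  let b : S := ⟨a, Set.subset_centralizer_centralizer rfl⟩
  have hexp : ((exp b : S) : A) = exp a := map_exp S.val continuous_subtype_val b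
  rw [← hexp, spectrum_coe_centralizer, spectrum_exp_of_normedCommRing,
    ← spectrum_coe_centralizer b]

theorem exp_add_algebraMap {𝕜 A : Type*} [RCLike 𝕜] [NormedRing A] [NormedAlgebra 𝕜 A]
    [CompleteSpace A] (a : A) (c : 𝕜) : exp (a + algebraMap 𝕜 A c) = exp c • exp a := by
  let : NormedAlgebra ℚ A := .restrictScalars ℚ 𝕜 A
  rw [exp_add_of_commute (Algebra.commute_algebraMap_right c a), ← algebraMap_exp_comm,
    ← Algebra.commutes, ← Algebra.smul_def]

section Positivity

variable {n : Type*} [Fintype n] [DecidableEq n]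

theorem pow_apply_pos_of_chain {R : Type*} [Semiring R] [PartialOrder R] [IsStrictOrderedRing R]
    {M : Matrix n n R} (hM : ∀ i j, 0 ≤ M i j) (c : ℕ → n) (k : ℕ)
    (hc : ∀ l < k, 0 < M (c l) (c (l + 1))) : 0 < (M ^ k) (c 0) (c k) := by
  induction k with
  | zero => simp
  | succ k ih =>
    rw [pow_succ, Matrix.mul_apply]
    exact Finset.sum_pos' (fun l _ => mul_nonneg (Matrix.pow_apply_nonneg hM k _ _) (hM _ _))
      ⟨c k, Finset.mem_univ _,
        mul_pos (ih fun l hl => hc l (hl.trans k.lt_succ_self)) (hc k k.lt_succ_self)⟩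

theorem MatrixIrreducible.of_pos_imp_pos {N : ℕ} {A B : Matrix (Fin N) (Fin N) ℝ}
    (hA : MatrixIrreducible A) (hAB : ∀ i j, 0 < A i j → 0 < B i j) : MatrixIrreducible B := by
  intro i j hij
  obtain ⟨k, c, h₀, hk, hc⟩ := hA i j hij
  exact ⟨k, c, h₀, hk, fun l hl => hAB _ _ (hc l hl)⟩

theorem MatrixIrreducible.exists_pow_apply_pos {N : ℕ} {M : Matrix (Fin N) (Fin N) ℝ}
    (hirr : MatrixIrreducible M) (hM : ∀ i j, 0 ≤ M i j) (i j : Fin N) :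
    ∃ k, 0 < (M ^ k) i j := by
  rcases eq_or_ne i j with rfl | hij
  · exact ⟨0, by simp⟩
  · obtain ⟨k, c, rfl, rfl, hc⟩ := hirr i j hij
    exact ⟨k, pow_apply_pos_of_chain hM c k hc⟩

open scoped Matrix.Norms.Operator in
theorem hasSum_exp_apply {𝕜 : Type*} [RCLike 𝕜] (M : Matrix n n 𝕜) (i j : n) :
    HasSum (fun k : ℕ => (k.factorial : 𝕜)⁻¹ * (M ^ k) i j) (exp M i j) :=
  (exp_series_hasSum_exp' (𝕂 := 𝕜) M).map (Matrix.entryAddMonoidHom 𝕜 i j)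
    (continuous_id.matrix_elem i j)

theorem exp_apply_pos_of_pow_apply_pos {M : Matrix n n ℝ} (hM : ∀ i j, 0 ≤ M i j) {i j : n}
    {k : ℕ} (hk : 0 < (M ^ k) i j) : 0 < exp M i j := by
  have term_nonneg (l : ℕ) : 0 ≤ (l.factorial : ℝ)⁻¹ * (M ^ l) i j :=
    mul_nonneg (by positivity) (Matrix.pow_apply_nonneg hM l i j)
  calc 0 < (k.factorial : ℝ)⁻¹ * (M ^ k) i j := by positivity
    _ ≤ exp M i j := le_hasSum (hasSum_exp_apply M i j) k fun l _ => term_nonneg l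

theorem exists_add_algebraMap_apply_self_pos (M : Matrix n n ℝ) :
    ∃ c : ℝ, ∀ i, 0 < (M + algebraMap ℝ (Matrix n n ℝ) c) i i := by
  obtain ⟨b, hb⟩ := Finite.exists_le fun i => -M i i
  refine ⟨b + 1, fun i => ?_⟩
  simp only [Matrix.add_apply, Matrix.algebraMap_matrix_apply, if_true,
    Algebra.algebraMap_self_apply]
  linarith [hb i]

open scoped Matrix.Norms.Operator in
theorem MatrixIrreducible.exp_apply_pos {N : ℕ} {M : Matrix (Fin N) (Fin N) ℝ}
    (hirr : MatrixIrreducible M) (hoff : ∀ i j, i ≠ j → 0 ≤ M i j) (i j : Fin N) :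
    0 < exp M i j := by
  obtain ⟨c, hdiag⟩ := exists_add_algebraMap_apply_self_pos M
  set B := M + algebraMap ℝ (Matrix (Fin N) (Fin N) ℝ) c
  have hB_off {i j : Fin N} (hij : i ≠ j) : B i j = M i j := by
    simp [B, Matrix.algebraMap_matrix_apply, hij]
  have hB_nonneg (i j : Fin N) : 0 ≤ B i j := by
    rcases eq_or_ne i j with rfl | hij
    · exact (hdiag i).le
    · exact (hoff i j hij).trans_eq (hB_off hij).symm
  have hB_irr : MatrixIrreducible B := hirr.of_pos_imp_pos fun i j hM => by
    rcases eq_or_ne i j with rfl | hij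
    · exact hdiag i
    · exact hM.trans_eq (hB_off hij).symm
  obtain ⟨k, hk⟩ := hB_irr.exists_pow_apply_pos hB_nonneg i j
  have hexpB : exp B = Real.exp c • exp M := by
    rw [Real.exp_eq_exp_ℝ]
    exact exp_add_algebraMap M c
  have hpos : 0 < Real.exp c * exp M i j := by
    simpa only [hexpB, Matrix.smul_apply, smul_eq_mul] using
      exp_apply_pos_of_pow_apply_pos hB_nonneg hk
  exact pos_of_mul_pos_right hpos (Real.exp_pos c).le

end Positivity

section MatExp

variable {N : ℕ} (M : Matrix (Fin N) (Fin N) ℝ)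

theorem matExp_eq_exp : matExp M = exp M := by
  rw [exp_eq_tsum ℝ]
  rfl

open scoped Matrix.Norms.Operator in
theorem map_ofReal_matExp : (matExp M).map Complex.ofReal = exp (M.map Complex.ofReal) := by
  rw [matExp_eq_exp]
  exact map_exp (Complex.ofRealHom.mapMatrix (m := Fin N))
    (continuous_id.matrix_map Complex.continuous_ofReal) M

open scoped Matrix.Norms.Operator in
theorem spectrum_map_ofReal_matExp :
    spectrum ℂ ((matExp M).map Complex.ofReal) =
      Complex.exp '' spectrum ℂ (M.map Complex.ofReal) := by
  rw [map_ofReal_matExp]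
  exact spectrum_exp (M.map Complex.ofReal)

theorem spectrumAbs_matExp : spectrumAbs (matExp M) = Real.exp '' spectrumRe M := by
  ext x
  simp [spectrumAbs, spectrumRe, spectrum_map_ofReal_matExp, Complex.norm_exp]

open scoped Pointwise in
theorem spectrumRe_smul {t : ℝ} (ht : t ≠ 0) :
    spectrumRe (t • M) = (t * ·) '' spectrumRe M := by
  let u : ℂˣ := Units.mk0 t (Complex.ofReal_ne_zero.2 ht)
  have hmap : (t • M).map Complex.ofReal = u • M.map Complex.ofReal := by
    ext i j
    simp [u, Units.smul_def]
  have hspec : spectrum ℂ ((t • M).map Complex.ofReal) = u • spectrum ℂ (M.map Complex.ofReal) := by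
    rw [hmap, spectrum.unit_smul_eq_smul]
  ext x
  simp [spectrumRe, hspec, Set.mem_smul_set, Units.smul_def, u]

end MatExp

theorem stmt2 {N : ℕ} (hN : 2 ≤ N) (A : Matrix (Fin N) (Fin N) ℝ)
    (hoff : ∀ i j, i ≠ j → 0 ≤ A i j) (hirr : MatrixIrreducible A)
    (t : ℝ) (ht : 0 < t) (sA : ℝ)
    (hsA : IsGreatest (spectrumRe A) sA) :
    (∀ i j, 0 < matExp (t • A) i j) ∧
      IsGreatest (spectrumAbs (matExp (t • A))) (Real.exp (t * sA)) := by
  constructor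
  · have hirr_smul : MatrixIrreducible (t • A) := hirr.of_pos_imp_pos fun _ _ => mul_pos ht
    have hoff_smul (i j : Fin N) (hij : i ≠ j) : 0 ≤ (t • A) i j := mul_nonneg ht.le (hoff i j hij)
    rw [matExp_eq_exp]
    exact hirr_smul.exp_apply_pos hoff_smul
  · have hmono : Monotone fun x => Real.exp (t * x) :=
      Real.exp_monotone.comp (monotone_mul_left_of_nonneg ht.le)
    rw [spectrumAbs_matExp, spectrumRe_smul A ht.ne', Set.image_image]
    exact hmono.map_isGreatest hsA
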